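/- Optimality of type abstraction: for every nonempty valid set C of static security types and every gradual security type S̃, if C ⊆ γ_S(S̃) then α_S(C) ⊑ S̃. -/

import Mathlib

/-!
Optimality of `α_S` reduces to optimality of `α_ℓ` (`gammaL_alphaL_subset`): a nonempty set of
labels inside `γ_ℓ(ℓ̃)` is either a singleton, which `α_ℓ` represents exactly, or has two distinct
elements, which forces `ℓ̃ = ?`. The type-level claim follows by induction on the derivation of
`α_S(C)`. Since `C` is nonempty, one of its elements shows that `S̃` has the same head constructor
as `α_S(C)`; the inclusion `C ⊆ γ_S(S̃)` then projects to the label, domain and codomain sets, which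
are again nonempty.
-/

/-- Static security types: S ::= Bool_ℓ | S →_ℓ S. -/
inductive SType (L : Type) where
  | bool (l : L)
  | arrow (S1 : SType L) (l : L) (S2 : SType L)

variable {L : Type} [Lattice L] [BoundedOrder L]

/-- Static subtyping. -/
inductive SSub : SType L → SType L → Prop where
  | bool {l l' : L} : l ≤ l' → SSub (.bool l) (.bool l')
  | arrow {S1 S1' S2 S2' : SType L} {l l' : L} :
      SSub S1' S1 → SSub S2 S2' → l ≤ l' →
      SSub (.arrow S1 l S2) (.arrow S1' l' S2')

/-- Label stamping on static types. -/
def SType.stamp : SType L → L → SType L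
  | .bool l, l' => .bool (l ⊔ l')
  | .arrow S1 l S2, l' => .arrow S1 (l ⊔ l') S2

mutual
/-- Partial subtyping join ⋎. -/
def sjoin : SType L → SType L → Option (SType L)
  | .bool l, .bool l' => some (.bool (l ⊔ l'))
  | .arrow S11 l S12, .arrow S21 l' S22 => do
      let m ← smeet S11 S21
      let j ← sjoin S12 S22
      pure (.arrow m (l ⊔ l') j)
  | _, _ => none
/-- Partial subtyping meet ⋏. -/
def smeet : SType L → SType L → Option (SType L)
  | .bool l, .bool l' => some (.bool (l ⊓ l'))
  | .arrow S11 l S12, .arrow S21 l' S22 => do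
      let j ← sjoin S11 S21
      let m ← smeet S12 S22
      pure (.arrow j (l ⊓ l') m)
  | _, _ => none
end
/-- Gradual labels: a static label or the unknown label ?. -/
inductive GLabel (L : Type) where
  | lab (l : L)
  | unk

/-- Label concretization γ_ℓ. -/
def gammaL {L : Type} : GLabel L → Set L
  | .lab l => {l}
  | .unk => Set.univ

/-- Label precision: ℓ̃₁ ⊑ ℓ̃₂ iff γ_ℓ(ℓ̃₁) ⊆ γ_ℓ(ℓ̃₂). -/
def lprec {L : Type} (a b : GLabel L) : Prop := gammaL a ⊆ gammaL b

-- Label abstraction α_ℓ: singleton sets map to their element, every other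
-- nonempty set maps to ?. (It is undefined — arbitrary here — on the empty set.)
open Classical in
noncomputable def alphaL {L : Type} (C : Set L) : GLabel L :=
  if h : ∃ l, C = {l} then .lab h.choose else .unk

/-- Consistent label ordering ℓ̃₁ ≾ ℓ̃₂. -/
def clle {L : Type} [Lattice L] [BoundedOrder L] (a b : GLabel L) : Prop :=
  ∃ l1 ∈ gammaL a, ∃ l2 ∈ gammaL b, l1 ≤ l2
/-- Gradual security types: S̃ ::= Bool_ℓ̃ | S̃ →_ℓ̃ S̃. -/
inductive GType (L : Type) where
  | bool (l : GLabel L)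
  | arrow (S1 : GType L) (l : GLabel L) (S2 : GType L)

/-- Type concretization γ_S. -/
def gammaS {L : Type} : GType L → Set (SType L)
  | .bool g => {T | ∃ l ∈ gammaL g, T = .bool l}
  | .arrow G1 g G2 =>
      {T | ∃ T1 ∈ gammaS G1, ∃ T2 ∈ gammaS G2, ∃ l ∈ gammaL g, T = .arrow T1 l T2}

/-- Type precision: S̃₁ ⊑ S̃₂ iff γ_S(S̃₁) ⊆ γ_S(S̃₂). -/
def gtprec {L : Type} (a b : GType L) : Prop := gammaS a ⊆ gammaS b

variable {L : Type} [Lattice L] [BoundedOrder L]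

/-- Consistent subtyping S̃₁ ≲ S̃₂. -/
def ConsSub (a b : GType L) : Prop :=
  ∃ T1 ∈ gammaS a, ∃ T2 ∈ gammaS b, SSub T1 T2

/-- Gradual label join ⊔̃, as the abstraction of the lifted join. -/
noncomputable def gljoin (a b : GLabel L) : GLabel L :=
  alphaL {l | ∃ l1 ∈ gammaL a, ∃ l2 ∈ gammaL b, l = l1 ⊔ l2}

/-- Gradual label meet ⊓̃, as the abstraction of the lifted meet. -/
noncomputable def glmeet (a b : GLabel L) : GLabel L :=
  alphaL {l | ∃ l1 ∈ gammaL a, ∃ l2 ∈ gammaL b, l = l1 ⊓ l2}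

/-- Gradual label stamping on gradual types. -/
noncomputable def GType.stamp : GType L → GLabel L → GType L
  | .bool g, g' => .bool (gljoin g g')
  | .arrow S1 g S2, g' => .arrow S1 (gljoin g g') S2

mutual
/-- Gradual (partial) subtyping join ⋎̃. -/
noncomputable def ggsjoin : GType L → GType L → Option (GType L)
  | .bool a, .bool b => some (.bool (gljoin a b))
  | .arrow S11 a S12, .arrow S21 b S22 => do
      let m ← ggsmeet S11 S21
      let j ← ggsjoin S12 S22
      pure (.arrow m (gljoin a b) j)
  | _, _ => none
/-- Gradual (partial) subtyping meet ⋏̃. -/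
noncomputable def ggsmeet : GType L → GType L → Option (GType L)
  | .bool a, .bool b => some (.bool (glmeet a b))
  | .arrow S11 a S12, .arrow S21 b S22 => do
      let j ← ggsjoin S11 S21
      let m ← ggsmeet S12 S22
      pure (.arrow j (glmeet a b) m)
  | _, _ => none
end
/-- Valid sets of static security types: all elements are Booleans, or all
elements are function types whose domain set and codomain set are valid. -/
inductive ValidSet {L : Type} : Set (SType L) → Prop where
  | bool {C : Set (SType L)} (h : ∀ S ∈ C, ∃ l, S = SType.bool l) : ValidSet C
  | arrow {C : Set (SType L)}
      (h : ∀ S ∈ C, ∃ S1 l S2, S = SType.arrow S1 l S2)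
      (h1 : ValidSet {S1 | ∃ l S2, SType.arrow S1 l S2 ∈ C})
      (h2 : ValidSet {S2 | ∃ S1 l, SType.arrow S1 l S2 ∈ C}) : ValidSet C

/-- Type abstraction α_S, as a (functional) relation: a set all of whose
elements are Booleans abstracts to Bool labeled with the abstraction of its
label set; a set of function types abstracts to the arrow of the abstractions
of its domain set, label set and codomain set. -/
inductive AbsS {L : Type} : Set (SType L) → GType L → Prop where
  | bool {C : Set (SType L)} (h : ∀ S ∈ C, ∃ l, S = SType.bool l) :
      AbsS C (GType.bool (alphaL {l | SType.bool l ∈ C}))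
  | arrow {C : Set (SType L)} {G1 G2 : GType L}
      (h : ∀ S ∈ C, ∃ S1 l S2, S = SType.arrow S1 l S2)
      (h1 : AbsS {S1 | ∃ l S2, SType.arrow S1 l S2 ∈ C} G1)
      (h2 : AbsS {S2 | ∃ S1 l, SType.arrow S1 l S2 ∈ C} G2) :
      AbsS C (GType.arrow G1 (alphaL {l | ∃ S1 S2, SType.arrow S1 l S2 ∈ C}) G2)
/-- Optimality of label abstraction. Nonemptiness is essential: `alphaL ∅` is the junk value `?`. -/
theorem gammaL_alphaL_subset {L : Type} {C : Set L} (hne : C.Nonempty) {g : GLabel L}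
    (h : C ⊆ gammaL g) : gammaL (alphaL C) ⊆ gammaL g := by
  cases g with
  | unk => exact Set.subset_univ _
  | lab l =>
    have hC : ∃ l, C = {l} := ⟨l, hne.subset_singleton_iff.mp h⟩
    have hα : alphaL C = .lab hC.choose := by simp only [alphaL, dif_pos hC]
    rw [hα]
    change {hC.choose} ⊆ gammaL (.lab l)
    rw [← hC.choose_spec]
    exact h

/-- optimality of type abstraction. -/
theorem alphaS_optimal {L : Type} [Lattice L] [BoundedOrder L]
    (C : Set (SType L)) (hne : C.Nonempty) (hv : ValidSet C)
    (St : GType L) (hsub : C ⊆ gammaS St)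
    (G : GType L) (hG : AbsS C G) : gtprec G St := by
  clear hv
  unfold gtprec
  induction hG generalizing St with
  | @bool C h =>
    obtain ⟨S, hS⟩ := hne
    obtain ⟨l, rfl⟩ := h S hS
    cases St with
    | arrow G1 g G2 =>
      obtain ⟨_, _, _, _, _, _, he⟩ := hsub hS
      cases he
    | bool g =>
      have hl : {l | SType.bool l ∈ C} ⊆ gammaL g := by
        intro k hk
        obtain ⟨_, hm, he⟩ := hsub hk
        cases he
        exact hm
      rintro _ ⟨k, hk, rfl⟩
      exact ⟨k, gammaL_alphaL_subset ⟨l, hS⟩ hl hk, rfl⟩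
  | @arrow C G1 G2 h h1 h2 ih1 ih2 =>
    obtain ⟨S, hS⟩ := hne
    obtain ⟨S1, l, S2, rfl⟩ := h S hS
    cases St with
    | bool g =>
      obtain ⟨_, _, he⟩ := hsub hS
      cases he
    | arrow H1 g H2 =>
      have key : ∀ {T1 k T2}, SType.arrow T1 k T2 ∈ C →
          T1 ∈ gammaS H1 ∧ k ∈ gammaL g ∧ T2 ∈ gammaS H2 := by
        intro T1 k T2 hT
        obtain ⟨_, a, _, b, _, c, he⟩ := hsub hT
        cases he
        exact ⟨a, c, b⟩
      have hl : {l | ∃ S1 S2, SType.arrow S1 l S2 ∈ C} ⊆ gammaL g :=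
        fun _ ⟨_, _, hT⟩ => (key hT).2.1
      have hn : {l | ∃ S1 S2, SType.arrow S1 l S2 ∈ C}.Nonempty := ⟨l, S1, S2, hS⟩
      have hd : {S1 | ∃ l S2, SType.arrow S1 l S2 ∈ C} ⊆ gammaS H1 :=
        fun _ ⟨_, _, hT⟩ => (key hT).1
      have hc : {S2 | ∃ S1 l, SType.arrow S1 l S2 ∈ C} ⊆ gammaS H2 :=
        fun _ ⟨_, _, hT⟩ => (key hT).2.2
      rintro _ ⟨T1, hT1, T2, hT2, k, hk, rfl⟩
      exact ⟨T1, ih1 ⟨S1, l, S2, hS⟩ H1 hd hT1,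
        T2, ih2 ⟨S2, S1, l, hS⟩ H2 hc hT2,
        k, gammaL_alphaL_subset hn hl hk, rfl⟩
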